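/- In the deconvolution setting with data f = K*g and κ ≤ l_min/6: let u_1 ∈ PC[0,1] have no jump in ∪_i N_i, and assume 6·h_max·κ ≤ (1/2)·h_min·(l_min − 2κ) − γ. Then there exists u_2 ∈ PC[0,1] with P_γ(u_2) ≤ P_γ(u_1) such that u_2 has at least one jump in each interval J_i, i = 1,...,n. -/

import Mathlib

open MeasureTheory Filter Set
open scoped ENNReal Classical

noncomputable section

/-- The Lebesgue measure restricted to `[0,1]`. -/
def mu01 : Measure ℝ := volume.restrict (Set.Icc (0:ℝ) 1)

/-- The step function determined by partition points `x` and values `a`. -/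
def stepF {m : ℕ} (x : Fin (m + 1) → ℝ) (a : Fin m → ℝ) : ℝ → ℝ := fun t =>
  ∑ l : Fin m, Set.indicator (Set.Ioo (x l.castSucc) (x l.succ)) (fun _ => a l) t

/-- `u` is a.e. on `[0,1]` represented by the step function with partition `x` and values `a`. -/
def IsPCRep (u : ℝ → ℝ) {m : ℕ} (x : Fin (m + 1) → ℝ) (a : Fin m → ℝ) : Prop :=
  StrictMono x ∧ x 0 = 0 ∧ x (Fin.last m) = 1 ∧ ∀ᵐ t ∂mu01, u t = stepF x a t

/-- `u` is piecewise constant on `[0,1]` (up to a.e. equality). -/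
def IsPC (u : ℝ → ℝ) : Prop :=
  ∃ (m : ℕ) (x : Fin (m + 1) → ℝ) (a : Fin m → ℝ), IsPCRep u x a

/-- The number of jumps `J(u)`: the minimal number of interior partition points over all
piecewise constant representations of `u`. -/
def jumps (u : ℝ → ℝ) : ℕ :=
  sInf {jj : ℕ | ∃ (x : Fin (jj + 2) → ℝ) (a : Fin (jj + 1) → ℝ), IsPCRep u x a}

/-- `u` is piecewise constant with all jump locations inside `S`. -/
def IsPCIn (u : ℝ → ℝ) (S : Set ℝ) : Prop :=
  ∃ (m : ℕ) (x : Fin (m + 1) → ℝ) (a : Fin m → ℝ), IsPCRep u x a ∧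
    ∀ i : Fin (m + 1), i ≠ 0 → i ≠ Fin.last m → x i ∈ S

/-- The `L¹[0,1]` distance of two functions. -/
def L1dist (u v : ℝ → ℝ) : ℝ := ∫ t, |u t - v t| ∂mu01

/-- The continuous `L¹`-Potts functional `P_γ` with data `f`. -/
def Potts (γ : ℝ) (f u : ℝ → ℝ) : ℝ≥0∞ :=
  if IsPC u then ENNReal.ofReal (γ * (jumps u : ℝ) + L1dist u f) else ⊤

/-- The (semi-)discrete `L¹`-Potts functional with data `f`, restricted to piecewise
constant functions whose jumps lie in `S`. -/
def PottsIn (γ : ℝ) (f : ℝ → ℝ) (S : Set ℝ) (u : ℝ → ℝ) : ℝ≥0∞ :=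
  if IsPCIn u S then ENNReal.ofReal (γ * (jumps u : ℝ) + L1dist u f) else ⊤

/-- Convolution `(K*g)(t) = ∫ K(s)·g(t−s) ds`. -/
def convK (K g : ℝ → ℝ) : ℝ → ℝ := fun t => ∫ s, K s * g (t - s)

/-- The piecewise constant function on `ℝ` with jump locations `j` and values `α`
(extended constantly outside the jump region): at `t`, its value is `α i` where `i`
is the number of jump locations strictly below `t`. -/
def stepOn {n : ℕ} (j : Fin n → ℝ) (α : Fin (n + 1) → ℝ) : ℝ → ℝ := fun t =>
  α ⟨(Finset.univ.filter fun i => j i < t).card,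
      Nat.lt_succ_of_le ((Finset.card_filter_le _ _).trans (by simp))⟩

/-- The jump locations together with the endpoints `0` and `1`. -/
def jext {n : ℕ} (j : Fin (n + 1) → ℝ) : Fin (n + 3) → ℝ :=
  Fin.cons (0 : ℝ) (Fin.snoc j (1 : ℝ))

/-- The minimal length `l_min` of the intervals of constancy (inside `[0,1]`). -/
def lmin {n : ℕ} (j : Fin (n + 1) → ℝ) : ℝ :=
  Finset.univ.inf' Finset.univ_nonempty
    fun i : Fin (n + 2) => jext j i.succ - jext j i.castSucc

/-- The minimal jump height `h_min`. -/
def hjumpMin {n : ℕ} (α : Fin (n + 2) → ℝ) : ℝ :=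
  Finset.univ.inf' Finset.univ_nonempty fun i : Fin (n + 1) => |α i.succ - α i.castSucc|

/-- The maximal jump height `h_max`. -/
def hjumpMax {n : ℕ} (α : Fin (n + 2) → ℝ) : ℝ :=
  Finset.univ.sup' Finset.univ_nonempty fun i : Fin (n + 1) => |α i.succ - α i.castSucc|

/-- The (real-valued) `L¹`-Potts value `γ·J(u) + ‖u − f‖₁` for piecewise constant `u`. -/
def PottsVal (γ : ℝ) (f u : ℝ → ℝ) : ℝ := γ * (jumps u : ℝ) + L1dist u f

/-- `u` is a.e. equal to a constant in a neighbourhood of `t`. -/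
def AEConstAt (u : ℝ → ℝ) (t : ℝ) : Prop :=
  ∃ c, ∃ ε > 0, ∀ᵐ s, s ∈ Ioo (t - ε) (t + ε) → u s = c

/-- The points of `(0,1)` near which `u` is not a.e. constant. -/
def jumpSet (u : ℝ → ℝ) : Set ℝ := {t | t ∈ Ioo (0 : ℝ) 1 ∧ ¬ AEConstAt u t}

theorem exists_mem_Ioo_of_ae {p : ℝ → Prop} (hp : ∀ᵐ s, p s) {a b : ℝ} (hab : a < b) :
    ∃ s ∈ Ioo a b, p s := by
  by_contra! h
  have h0 : volume (Ioo a b) = 0 := measure_mono_null (fun s hs => h s hs) hp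
  rw [Real.volume_Ioo, ENNReal.ofReal_eq_zero] at h0
  linarith

theorem aeConstAt_of_Ioo {u : ℝ → ℝ} {a b t c : ℝ} (ht : t ∈ Ioo a b)
    (h : ∀ᵐ s, s ∈ Ioo a b → u s = c) : AEConstAt u t := by
  refine ⟨c, min (t - a) (b - t), lt_min (by linarith [ht.1]) (by linarith [ht.2]), ?_⟩
  filter_upwards [h] with s hs hst
  exact hs ⟨by linarith [hst.1, min_le_left (t - a) (b - t)],
    by linarith [hst.2, min_le_right (t - a) (b - t)]⟩

theorem ae_const_of_aeConstAt {u : ℝ → ℝ} {a b : ℝ} (h : ∀ t ∈ Ioo a b, AEConstAt u t) :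
    ∃ c, ∀ᵐ s, s ∈ Ioo a b → u s = c := by
  rcases le_or_gt b a with hab | hab
  · exact ⟨0, Eventually.of_forall fun s hs => absurd (hs.1.trans hs.2) (not_lt.2 hab)⟩
  choose! c ε hε hc using h
  have hloc : ∀ t ∈ Ioo a b, ∀ s ∈ Ioo a b, s ∈ Ioo (t - ε t) (t + ε t) → c s = c t := by
    intro t ht s hs hst
    obtain ⟨r, hr, h1, h2⟩ := exists_mem_Ioo_of_ae ((hc t ht).and (hc s hs))
      (a := max (t - ε t) (s - ε s)) (b := min (t + ε t) (s + ε s))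
      (max_lt (lt_min (by linarith [hε t ht]) (by linarith [hst.1, hε s hs]))
        (lt_min (by linarith [hst.2, hε s hs]) (by linarith [hε s hs])))
    simp only [mem_Ioo, max_lt_iff, lt_min_iff] at hr
    rw [← h1 ⟨hr.1.1, hr.2.1⟩, ← h2 ⟨hr.1.2, hr.2.2⟩]
  have hev : ∀ t ∈ Ioo a b, c =ᶠ[nhds t] fun _ => c t := by
    intro t ht
    filter_upwards [Ioo_mem_nhds ht.1 ht.2,
      Ioo_mem_nhds (show t - ε t < t by linarith [hε t ht]) (show t < t + ε t by linarith [hε t ht])]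
      with s hs hs'
    exact hloc t ht s hs hs'
  have hconst : ∀ s ∈ Ioo a b, ∀ t ∈ Ioo a b, c s = c t := fun s hs t ht =>
    isOpen_Ioo.is_const_of_deriv_eq_zero isPreconnected_Ioo
      (fun r hr => ((hasDerivAt_const r (c r)).congr_of_eventuallyEq
        (hev r hr)).differentiableAt.differentiableWithinAt)
      (fun r hr => ((hasDerivAt_const r (c r)).congr_of_eventuallyEq (hev r hr)).deriv) hs ht
  obtain ⟨r, hr⟩ := nonempty_Ioo.2 hab
  refine ⟨c r, ?_⟩
  rw [ae_iff]
  refine measure_null_of_locally_null _ fun t ht => ?_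
  simp only [Classical.not_imp, mem_ofPred_eq] at ht
  refine ⟨_, inter_mem_nhdsWithin _ (Ioo_mem_nhds (show t - ε t < t by linarith [hε t ht.1])
    (show t < t + ε t by linarith [hε t ht.1])), measure_mono_null ?_ (hc t ht.1)⟩
  rintro s ⟨hs, hs'⟩
  simp only [Classical.not_imp, mem_ofPred_eq] at hs
  simp only [mem_compl_iff, mem_ofPred_eq, Classical.not_imp]
  exact ⟨hs', by rw [hconst t ht.1 r hr]; exact hs.2⟩

theorem exists_mem_gap {m : ℕ} (x : Fin (m + 1) → ℝ) {t : ℝ} (h0 : x 0 < t)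
    (h1 : t < x (Fin.last m)) (ht : t ∉ range x) :
    ∃ l : Fin m, t ∈ Ioo (x l.castSucc) (x l.succ) := by
  by_contra! h
  have : ∀ i : Fin (m + 1), x i < t := by
    intro i
    induction i using Fin.induction with
    | zero => exact h0
    | succ i ih =>
      by_contra hi
      exact h i ⟨ih, lt_of_le_of_ne (not_lt.1 hi) fun e => ht ⟨_, e.symm⟩⟩
  exact lt_asymm h1 (this _)

theorem stepF_eq {m : ℕ} {x : Fin (m + 1) → ℝ} (hx : StrictMono x) (a : Fin m → ℝ) {t : ℝ}
    {l : Fin m} (ht : t ∈ Ioo (x l.castSucc) (x l.succ)) : stepF x a t = a l := by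
  unfold stepF
  rw [Finset.sum_eq_single l]
  · simp [ht]
  · intro k _ hk
    refine indicator_of_notMem (fun hk' => hk ?_) _
    have h1 := hx.lt_iff_lt.1 (hk'.1.trans ht.2)
    have h2 := hx.lt_iff_lt.1 (ht.1.trans hk'.2)
    rw [Fin.castSucc_lt_succ_iff] at h1 h2
    exact le_antisymm h1 h2
  · simp

theorem ae_of_ae_mu01 {p : ℝ → Prop} (h : ∀ᵐ t ∂mu01, p t) :
    ∀ᵐ t, t ∈ Icc (0 : ℝ) 1 → p t := (ae_restrict_iff' measurableSet_Icc).1 h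

theorem ae_mu01_of_ae {p : ℝ → Prop} (h : ∀ᵐ t, t ∈ Ioo (0 : ℝ) 1 → p t) :
    ∀ᵐ t ∂mu01, p t := by
  refine (ae_restrict_iff' measurableSet_Icc).2 ?_
  filter_upwards [h, (Set.toFinite {(0 : ℝ), 1}).countable.ae_notMem volume] with t ht hn hI
  simp only [mem_insert_iff, mem_singleton_iff, not_or] at hn
  exact ht ⟨lt_of_le_of_ne hI.1 (Ne.symm hn.1), lt_of_le_of_ne hI.2 hn.2⟩

theorem IsPCRep.ae_eq_on_gap {u : ℝ → ℝ} {m : ℕ} {x : Fin (m + 1) → ℝ} {a : Fin m → ℝ}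
    (h : IsPCRep u x a) (l : Fin m) :
    ∀ᵐ t, t ∈ Ioo (x l.castSucc) (x l.succ) → u t = a l := by
  filter_upwards [ae_of_ae_mu01 h.2.2.2] with t ht htl
  rw [ht ⟨?_, ?_⟩, stepF_eq h.1 a htl]
  · rw [← h.2.1]; exact (h.1.monotone (Fin.zero_le _)).trans htl.1.le
  · rw [← h.2.2.1]; exact htl.2.le.trans (h.1.monotone (Fin.le_last _))

theorem IsPCRep.exists_of_mem_jumpSet {u : ℝ → ℝ} {m : ℕ} {x : Fin (m + 1) → ℝ} {a : Fin m → ℝ}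
    (h : IsPCRep u x a) {t : ℝ} (ht : t ∈ jumpSet u) :
    ∃ i, i ≠ 0 ∧ i ≠ Fin.last m ∧ x i = t := by
  have hr : t ∈ range x := by
    by_contra hn
    obtain ⟨l, hl⟩ := exists_mem_gap x (h.2.1 ▸ ht.1.1) (h.2.2.1 ▸ ht.1.2) hn
    exact ht.2 (aeConstAt_of_Ioo hl (h.ae_eq_on_gap l))
  obtain ⟨i, rfl⟩ := hr
  refine ⟨i, ?_, ?_, rfl⟩
  · rintro rfl
    exact absurd ht.1.1 (by rw [h.2.1]; exact lt_irrefl _)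
  · rintro rfl
    exact absurd ht.1.2 (by rw [h.2.2.1]; exact lt_irrefl _)

theorem IsPC.finite_jumpSet {u : ℝ → ℝ} (h : IsPC u) : (jumpSet u).Finite := by
  obtain ⟨m, x, a, h⟩ := h
  refine (Set.finite_range x).subset fun t ht => ?_
  obtain ⟨i, -, -, hi⟩ := h.exists_of_mem_jumpSet ht
  exact ⟨i, hi⟩

theorem exists_rep_of_jumpSet_subset {u : ℝ → ℝ} (D : Finset ℝ) (hD : ∀ t ∈ D, t ∈ Ioo (0 : ℝ) 1)
    (hu : jumpSet u ⊆ D) :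
    ∃ (x : Fin (D.card + 2) → ℝ) (a : Fin (D.card + 1) → ℝ), IsPCRep u x a ∧
      (∀ t ∈ D, ∃ i, i ≠ 0 ∧ i ≠ Fin.last (D.card + 1) ∧ x i = t) ∧
      ∀ i, i ≠ 0 → i ≠ Fin.last (D.card + 1) → x i ∈ D := by
  have h0 : (0 : ℝ) ∉ insert (1 : ℝ) D := by
    simp only [Finset.mem_insert, not_or]
    exact ⟨by norm_num, fun h => lt_irrefl _ (hD 0 h).1⟩
  have h1 : (1 : ℝ) ∉ D := fun h => lt_irrefl _ (hD 1 h).2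
  set E : Finset ℝ := insert 0 (insert 1 D) with hE
  have hEI : ∀ t ∈ E, t ∈ Icc (0 : ℝ) 1 := by
    intro t ht
    simp only [hE, Finset.mem_insert] at ht
    rcases ht with rfl | rfl | ht
    · simp
    · simp
    · exact Ioo_subset_Icc_self (hD t ht)
  have hcard : E.card = D.card + 1 + 1 := by
    rw [hE, Finset.card_insert_of_notMem h0, Finset.card_insert_of_notMem h1]
  set x := E.orderEmbOfFin hcard with hx
  have hmono : StrictMono x := x.strictMono
  have hrange : ∀ t ∈ E, ∃ i, x i = t := by
    intro t ht
    have : t ∈ range x := by rw [hx, Finset.range_orderEmbOfFin]; exact ht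
    exact this
  have hmem : ∀ i, x i ∈ E := fun i => Finset.orderEmbOfFin_mem E hcard i
  have hx0 : x 0 = 0 := by
    obtain ⟨i, hi⟩ := hrange 0 (by simp [hE])
    exact le_antisymm (hi ▸ hmono.monotone (Fin.zero_le i)) (hEI _ (hmem _)).1
  have hx1 : x (Fin.last _) = 1 := by
    obtain ⟨i, hi⟩ := hrange 1 (by simp [hE])
    exact le_antisymm (hEI _ (hmem _)).2 (hi ▸ hmono.monotone (Fin.le_last i))
  have hgap : ∀ l : Fin (D.card + 1), ∃ c, ∀ᵐ s,
      s ∈ Ioo (x l.castSucc) (x l.succ) → u s = c := by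
    intro l
    refine ae_const_of_aeConstAt fun t ht => ?_
    by_contra hn
    have htI : t ∈ Ioo (0 : ℝ) 1 :=
      ⟨(hEI _ (hmem _)).1.trans_lt ht.1, ht.2.trans_le (hEI _ (hmem _)).2⟩
    have htD : t ∈ E := by
      have : t ∈ D := hu ⟨htI, hn⟩
      simp [hE, this]
    obtain ⟨i, rfl⟩ := hrange t htD
    have h2 := hmono.lt_iff_lt.1 ht.1
    have h3 := hmono.lt_iff_lt.1 ht.2
    rw [Fin.lt_def] at h2 h3
    simp only [Fin.val_castSucc, Fin.val_succ] at h2 h3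
    omega
  choose a ha using hgap
  refine ⟨x, a, ⟨hmono, hx0, hx1, ae_mu01_of_ae ?_⟩, ?_, ?_⟩
  · filter_upwards [eventually_countable_forall.2 ha,
      (Set.finite_range x).countable.ae_notMem volume] with t ht hn hI
    obtain ⟨l, hl⟩ := exists_mem_gap x (hx0.symm ▸ hI.1) (hx1.symm ▸ hI.2) hn
    rw [ht l hl, stepF_eq hmono a hl]
  · intro t ht
    obtain ⟨i, rfl⟩ := hrange t (by simp [hE, ht])
    refine ⟨i, ?_, ?_, rfl⟩
    · rintro rfl
      exact absurd (hD _ ht).1 (by rw [hx0]; exact lt_irrefl _)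
    · rintro rfl
      exact absurd (hD _ ht).2 (by rw [hx1]; exact lt_irrefl _)
  · intro i hi0 hi1
    have := hmem i
    simp only [hE, Finset.mem_insert] at this
    rcases this with h | h | h
    · exact absurd (hmono.injective (h.trans hx0.symm)) hi0
    · exact absurd (hmono.injective (h.trans hx1.symm)) hi1
    · exact h

theorem isPC_of_jumpSet_subset {u : ℝ → ℝ} (D : Finset ℝ) (hD : ∀ t ∈ D, t ∈ Ioo (0 : ℝ) 1)
    (hu : jumpSet u ⊆ D) : IsPC u ∧ jumps u ≤ D.card := by
  obtain ⟨x, a, h, -⟩ := exists_rep_of_jumpSet_subset D hD hu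
  exact ⟨⟨_, x, a, h⟩, Nat.sInf_le ⟨x, a, h⟩⟩

theorem IsPC.card_jumpSet_le {u : ℝ → ℝ} (h : IsPC u) :
    h.finite_jumpSet.toFinset.card ≤ jumps u := by
  have hne : {jj : ℕ | ∃ (x : Fin (jj + 2) → ℝ) (a : Fin (jj + 1) → ℝ),
      IsPCRep u x a}.Nonempty := by
    obtain ⟨x, a, hr, -⟩ := exists_rep_of_jumpSet_subset (u := u) h.finite_jumpSet.toFinset
      (fun t ht => ((Set.Finite.mem_toFinset _).1 ht).1) (by simp)
    exact ⟨_, x, a, hr⟩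
  obtain ⟨x, a, hr⟩ : ∃ (x : Fin (jumps u + 2) → ℝ) (a : Fin (jumps u + 1) → ℝ),
      IsPCRep u x a := Nat.sInf_mem hne
  have hsub : h.finite_jumpSet.toFinset ⊆
      ((Finset.univ.erase 0).erase (Fin.last (jumps u + 1))).image x := by
    intro t ht
    obtain ⟨i, hi0, hi1, rfl⟩ := hr.exists_of_mem_jumpSet ((Set.Finite.mem_toFinset _).1 ht)
    exact Finset.mem_image_of_mem _ (by simp [hi0, hi1])
  refine (Finset.card_le_card hsub).trans (Finset.card_image_le.trans ?_)
  rw [Finset.card_erase_of_mem (by simp [Fin.ext_iff]), Finset.card_erase_of_mem (by simp)]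
  simp

/-- A piecewise constant function has a representation with distinct adjacent values whose
interior partition points are exactly the points of `jumpSet u`. -/
theorem IsPC.exists_reduced_rep {u : ℝ → ℝ} (h : IsPC u) :
    ∃ (m : ℕ) (x : Fin (m + 2) → ℝ) (a : Fin (m + 1) → ℝ), IsPCRep u x a ∧
      (∀ i : Fin m, a i.castSucc ≠ a i.succ) ∧
      ∀ t ∈ jumpSet u, ∃ i, i ≠ 0 ∧ i ≠ Fin.last (m + 1) ∧ x i = t := by
  obtain ⟨x, a, hr, hx, hx'⟩ := exists_rep_of_jumpSet_subset (u := u) h.finite_jumpSet.toFinset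
    (fun t ht => ((Set.Finite.mem_toFinset _).1 ht).1) (by simp)
  refine ⟨_, x, a, hr, fun i hi => ?_, fun t ht => hx t ((Set.Finite.mem_toFinset _).2 ht)⟩
  have hm := (Set.Finite.mem_toFinset _).1 (hx' i.succ.castSucc
    (by simp [Fin.ext_iff]) (by simp [Fin.ext_iff]; omega))
  refine hm.2 (aeConstAt_of_Ioo (a := x i.castSucc.castSucc) (b := x i.succ.succ)
    (c := a i.succ) ⟨hr.1 (by simp [Fin.lt_def]), hr.1 (by simp [Fin.lt_def])⟩ ?_)
  filter_upwards [hr.ae_eq_on_gap i.castSucc, hr.ae_eq_on_gap i.succ,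
    (Set.finite_singleton (x i.succ.castSucc)).countable.ae_notMem volume] with t h1 h2 h3 ht
  rcases lt_or_gt_of_ne h3 with h | h
  · rw [← hi]
    exact h1 ⟨ht.1, by rwa [Fin.succ_castSucc]⟩
  · exact h2 ⟨h, ht.2⟩

theorem IsPC.integrable {u : ℝ → ℝ} (h : IsPC u) : Integrable u mu01 := by
  obtain ⟨m, x, a, h⟩ := h
  refine Integrable.congr ?_ (h.2.2.2.mono fun t ht => ht.symm)
  unfold stepF
  refine integrable_finsetSum _ fun l _ => ?_
  have : IsFiniteMeasure mu01 := by unfold mu01; infer_instance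
  exact (integrable_const (a l)).indicator measurableSet_Ioo

theorem stepOn_eq {n : ℕ} (d : Fin n → ℝ) (α : Fin (n + 1) → ℝ) {t : ℝ} (k : Fin (n + 1))
    (h : ∀ i, d i < t ↔ i.val < k.val) : stepOn d α t = α k := by
  unfold stepOn
  congr 1
  ext
  simp only [h]
  rw [Fin.card_filter_val_lt]
  exact min_eq_right (Nat.lt_succ_iff.1 k.2)

theorem measurable_stepOn {n : ℕ} (d : Fin n → ℝ) (α : Fin (n + 1) → ℝ) :
    Measurable (stepOn d α) := by
  have hcard : Measurable fun t : ℝ => (Finset.univ.filter fun i => d i < t).card := by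
    simp only [Finset.card_filter]
    exact Finset.measurable_fun_sum _ fun i _ =>
      Measurable.ite measurableSet_Ioi measurable_const measurable_const
  refine (measurable_from_top (f := α)).comp ?_
  refine measurable_to_countable' fun k => ?_
  convert hcard (measurableSet_singleton k.val) using 1
  ext t
  simp [Fin.ext_iff]

theorem convK_integrand_integrable {K g : ℝ → ℝ} {κ t β h : ℝ} (hKint : Integrable K)
    (hKpos : ∀ x, 0 ≤ K x) (hKsupp : Function.support K ⊆ Icc (-κ) κ) (hg : Measurable g)
    (hb : ∀ s ∈ Icc (-κ) κ, |g (t - s) - β| ≤ h) :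
    Integrable (fun s => K s * (g (t - s) - β)) ∧ ∀ s, |K s * (g (t - s) - β)| ≤ K s * h := by
  have hbd : ∀ s, |K s * (g (t - s) - β)| ≤ K s * h := by
    intro s
    by_cases hs : K s = 0
    · simp [hs]
    · rw [abs_mul, abs_of_nonneg (hKpos s)]
      exact mul_le_mul_of_nonneg_left (hb s (hKsupp hs)) (hKpos s)
  refine ⟨(hKint.mul_const h).mono' (hKint.aestronglyMeasurable.mul ?_)
    (Eventually.of_forall hbd), hbd⟩
  exact ((hg.comp (measurable_const.sub measurable_id)).sub_const β).aestronglyMeasurable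

theorem abs_convK_sub_le {K g : ℝ → ℝ} {κ t β h : ℝ} (hKint : Integrable K)
    (hKpos : ∀ x, 0 ≤ K x) (hKnorm : (∫ x, K x) = 1)
    (hKsupp : Function.support K ⊆ Icc (-κ) κ) (hg : Measurable g)
    (hb : ∀ s ∈ Icc (-κ) κ, |g (t - s) - β| ≤ h) : |convK K g t - β| ≤ h := by
  obtain ⟨hi, hbd⟩ := convK_integrand_integrable hKint hKpos hKsupp hg hb
  have heq : convK K g t = (∫ s, K s * (g (t - s) - β)) + β := by
    calc convK K g t = ∫ s, (K s * (g (t - s) - β) + K s * β) := by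
          unfold convK
          congr 1
          ext s
          ring
      _ = _ := by
          rw [integral_add hi (hKint.mul_const β), integral_mul_const, hKnorm, one_mul]
  rw [heq, add_sub_cancel_right]
  have hle := norm_integral_le_of_norm_le (f := fun s => K s * (g (t - s) - β))
    (hKint.mul_const h) (Eventually.of_forall hbd)
  rwa [integral_mul_const, hKnorm, one_mul] at hle

theorem stronglyMeasurable_convK {K g : ℝ → ℝ} (hKint : Integrable K) (hg : Measurable g) :
    StronglyMeasurable (convK K g) := by
  have hK := hKint.aestronglyMeasurable
  have heq : convK K g = fun t => ∫ s, hK.mk K s * g (t - s) := by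
    ext t
    refine integral_congr_ae ?_
    filter_upwards [hK.ae_eq_mk] with s hs
    rw [← hs]
  rw [heq]
  refine StronglyMeasurable.integral_prod_right (f := fun t s => hK.mk K s * g (t - s)) ?_
  refine Measurable.stronglyMeasurable ?_
  exact (hK.stronglyMeasurable_mk.measurable.comp measurable_snd).mul
    (hg.comp (measurable_fst.sub measurable_snd))

theorem integrable_convK_stepOn {n : ℕ} (d : Fin n → ℝ) (α : Fin (n + 1) → ℝ) {K : ℝ → ℝ} {κ : ℝ}
    (hKint : Integrable K) (hKpos : ∀ x, 0 ≤ K x) (hKnorm : (∫ x, K x) = 1)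
    (hKsupp : Function.support K ⊆ Icc (-κ) κ) : Integrable (convK K (stepOn d α)) mu01 := by
  have : IsFiniteMeasure mu01 := by unfold mu01; infer_instance
  refine Integrable.of_bound
    (stronglyMeasurable_convK hKint (measurable_stepOn d α)).aestronglyMeasurable
    (∑ i, |α i|) (Eventually.of_forall fun t => ?_)
  have h := abs_convK_sub_le (t := t) (β := 0) (h := ∑ i, |α i|) hKint hKpos hKnorm hKsupp
    (measurable_stepOn d α) fun s _ => ?_
  · simpa using h
  · rw [sub_zero]
    exact Finset.single_le_sum (f := fun i => |α i|) (fun i _ => abs_nonneg _) (Finset.mem_univ _)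

theorem jext_castSucc_succ {n : ℕ} (j : Fin (n + 1) → ℝ) (i : Fin (n + 1)) :
    jext j i.castSucc.succ = j i := by
  simp [jext]

theorem lmin_le_first {n : ℕ} (j : Fin (n + 1) → ℝ) : lmin j ≤ j 0 := by
  refine (Finset.inf'_le _ (Finset.mem_univ (0 : Fin (n + 2)))).trans (le_of_eq ?_)
  have h := jext_castSucc_succ j 0
  rw [Fin.castSucc_zero] at h
  rw [h]
  simp [jext]

theorem lmin_le_last {n : ℕ} (j : Fin (n + 1) → ℝ) : lmin j ≤ 1 - j (Fin.last n) := by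
  refine (Finset.inf'_le _ (Finset.mem_univ (Fin.last (n + 1)))).trans (le_of_eq ?_)
  have h := jext_castSucc_succ j (Fin.last n)
  rw [Fin.succ_castSucc, Fin.succ_last] at h
  rw [h]
  simp [jext]

theorem lmin_le_gap {n : ℕ} (j : Fin (n + 1) → ℝ) (i : Fin n) :
    lmin j ≤ j i.succ - j i.castSucc := by
  refine (Finset.inf'_le _ (Finset.mem_univ i.succ.castSucc)).trans (le_of_eq ?_)
  rw [jext_castSucc_succ, ← jext_castSucc_succ j i.castSucc, Fin.succ_castSucc, Fin.succ_castSucc]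

theorem lmin_le_of_lt {n : ℕ} {j : Fin (n + 1) → ℝ} (hj : StrictMono j) {i k : Fin (n + 1)}
    (hik : i < k) : lmin j ≤ j k - j i := by
  have hi : i.val < n := by omega
  have h := lmin_le_gap j ⟨i.val, hi⟩
  have h2 : j (Fin.succ ⟨i.val, hi⟩) ≤ j k := hj.monotone (by
    rw [Fin.le_def, Fin.val_succ]
    exact hik)
  have h3 : (Fin.castSucc ⟨i.val, hi⟩ : Fin (n + 1)) = i := rfl
  rw [h3] at h
  linarith

/-- A lower bound for an integral from bounds on three adjacent subintervals. -/
theorem le_integral_of_ae_le_three {D : ℝ → ℝ} {p a b q A B C : ℝ}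
    (hpa : p ≤ a) (hab : a ≤ b) (hbq : b ≤ q) (hD : IntervalIntegrable D volume p q)
    (hA : ∀ᵐ t, t ∈ Ioo p a → A ≤ D t) (hB : ∀ᵐ t, t ∈ Ioo a b → B ≤ D t)
    (hC : ∀ᵐ t, t ∈ Ioo b q → C ≤ D t) :
    A * (a - p) + B * (b - a) + C * (q - b) ≤ ∫ t in p..q, D t := by
  have piece : ∀ {x y c : ℝ}, x ≤ y → IntervalIntegrable D volume x y →
      (∀ᵐ t, t ∈ Ioo x y → c ≤ D t) → c * (y - x) ≤ ∫ t in x..y, D t := by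
    intro x y c hxy hi h
    have h1 : (∫ _ in x..y, c) ≤ ∫ t in x..y, D t := by
      refine intervalIntegral.integral_mono_ae_restrict hxy intervalIntegrable_const hi ?_
      refine (ae_restrict_iff' measurableSet_Icc).2 ?_
      filter_upwards [h, (Set.toFinite {x, y}).countable.ae_notMem volume] with t ht hn hI
      simp only [mem_insert_iff, mem_singleton_iff, not_or] at hn
      exact ht ⟨lt_of_le_of_ne hI.1 (Ne.symm hn.1), lt_of_le_of_ne hI.2 hn.2⟩
    rw [intervalIntegral.integral_const, smul_eq_mul] at h1
    linarith
  have sub : ∀ {x y : ℝ}, p ≤ x → x ≤ y → y ≤ q → IntervalIntegrable D volume x y := by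
    intro x y hx hxy hy
    refine hD.mono_set ?_
    rw [uIcc_of_le hxy, uIcc_of_le (hx.trans (hxy.trans hy))]
    exact Icc_subset_Icc hx hy
  have i1 := sub le_rfl hpa (hab.trans hbq)
  have i2 := sub hpa hab hbq
  have i3 := sub (hpa.trans hab) hbq le_rfl
  rw [← intervalIntegral.integral_add_adjacent_intervals (i1.trans i2) i3,
    ← intervalIntegral.integral_add_adjacent_intervals i1 i2]
  linarith [piece hpa i1 hA, piece hab i2 hB, piece hbq i3 hC]

theorem stepOn_eq_castSucc {n : ℕ} (d : Fin (n + 1) → ℝ) (α : Fin (n + 2) → ℝ) {t : ℝ}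
    {k : Fin (n + 1)} (hlo : ∀ i < k, d i < t) (hhi : ∀ i, k ≤ i → t ≤ d i) :
    stepOn d α t = α k.castSucc := by
  refine stepOn_eq d α _ fun i => ⟨fun h => ?_, fun h => hlo i h⟩
  by_contra hi
  exact absurd (hhi i (not_lt.1 hi)) (not_le.2 h)

theorem stepOn_eq_succ {n : ℕ} (d : Fin (n + 1) → ℝ) (α : Fin (n + 2) → ℝ) {t : ℝ}
    {k : Fin (n + 1)} (hlo : ∀ i ≤ k, d i < t) (hhi : ∀ i, k < i → t ≤ d i) :
    stepOn d α t = α k.succ := by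
  refine stepOn_eq d α _ fun i => ⟨fun h => ?_, fun h => hlo i ?_⟩
  · by_contra hi
    rw [Fin.val_succ] at hi
    exact absurd (hhi i (Fin.lt_def.2 (by omega))) (not_le.2 h)
  · rw [Fin.val_succ] at h
    exact Fin.le_def.2 (by omega)

/-- Points separating consecutive jump locations, each at distance at least `lmin j / 2` from
every jump location. -/
theorem exists_separators {n : ℕ} {j : Fin (n + 1) → ℝ} (hj : StrictMono j) (hl : 0 < lmin j) :
    ∃ p : ℕ → ℝ, p 0 = 0 ∧ p (n + 1) = 1 ∧ ∀ k : Fin (n + 1),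
      p k + lmin j / 2 ≤ j k ∧ j k + lmin j / 2 ≤ p (k + 1) ∧
      (∀ i < k, j i + lmin j / 2 ≤ p k) ∧ (∀ i, k < i → p (k + 1) + lmin j / 2 ≤ j i) ∧
      0 ≤ p k ∧ p (k + 1) ≤ 1 := by
  have hfirst := lmin_le_first j
  have hlast := lmin_le_last j
  have hge : ∀ i, lmin j ≤ j i := fun i => hfirst.trans (hj.monotone (Fin.zero_le i))
  have hle : ∀ i, lmin j ≤ 1 - j i := fun i => by
    linarith [hj.monotone (Fin.le_last i)]
  refine ⟨fun k => if k = 0 then 0 else if h : k < n + 1 then j ⟨k, h⟩ - lmin j / 2 else 1,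
    by simp, by simp, fun k => ⟨?_, ?_, fun i hi => ?_, fun i hi => ?_, ?_, ?_⟩⟩
  · have := hge k
    dsimp only
    split_ifs with h1 h2
    · linarith
    · simp
    · exact absurd k.2 h2
  · simp only [Nat.succ_ne_zero, if_false]
    split_ifs with h2
    · have := lmin_le_of_lt hj (i := k) (k := ⟨k + 1, h2⟩) (Fin.lt_def.2 (Nat.lt_succ_self _))
      linarith
    · linarith [hle k]
  · have := lmin_le_of_lt hj hi
    have h1 : k.val ≠ 0 := by have := Fin.lt_def.1 hi; omega
    simp only [h1, k.2, if_false, dif_pos]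
    linarith
  · have h1 : k.val + 1 < n + 1 := by have := Fin.lt_def.1 hi; omega
    have h2 : j ⟨k.val + 1, h1⟩ ≤ j i := hj.monotone (Fin.le_def.2 hi)
    simp only [h1, Nat.succ_ne_zero, if_false, dif_pos]
    linarith
  · have := hge k
    dsimp only
    split_ifs with h1 h2
    · rfl
    · change 0 ≤ j k - _
      linarith
    · exact zero_le_one
  · simp only [Nat.succ_ne_zero, if_false]
    split_ifs with h2
    · linarith [hle ⟨k + 1, h2⟩]
    · rfl

/-- Around a window `[s - κ, s + κ]` containing all jumps of `u` in `(p,q)`, the first and the last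
jump together with the values of `u` before and after them; if there is no jump, the centre `s`
is used instead. -/
theorem exists_first_last_jump {u : ℝ → ℝ} {p q s κ : ℝ} (hκ : 0 < κ) (hp : p < s - κ)
    (hq : s + κ < q) (hp0 : 0 ≤ p) (hq1 : q ≤ 1) (hfin : (jumpSet u).Finite)
    (hsub : ∀ t ∈ jumpSet u, t ∈ Ioo p q → t ∈ Icc (s - κ) (s + κ)) :
    ∃ d d' c c' : ℝ, d ∈ Icc (s - κ) (s + κ) ∧ d' ∈ Icc (s - κ) (s + κ) ∧ d ≤ d' ∧
      (∀ᵐ t, t ∈ Ioo p d → u t = c) ∧ (∀ᵐ t, t ∈ Ioo d' q → u t = c') ∧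
      ((d ∈ jumpSet u ∧ d' ∈ jumpSet u) ∨ (d = s ∧ d' = s ∧ c = c')) := by
  have hconst : ∀ a b : ℝ, p ≤ a → b ≤ q → (∀ t ∈ jumpSet u, t ∉ Ioo a b) →
      ∃ c, ∀ᵐ t, t ∈ Ioo a b → u t = c := by
    intro a b ha hb h
    refine ae_const_of_aeConstAt fun t ht => ?_
    by_contra hn
    exact h t ⟨⟨by linarith [ht.1], by linarith [ht.2]⟩, hn⟩ ht
  set W := hfin.toFinset.filter (· ∈ Ioo p q) with hW
  have hmem : ∀ t, t ∈ W ↔ t ∈ jumpSet u ∧ t ∈ Ioo p q := by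
    intro t
    rw [hW, Finset.mem_filter, Set.Finite.mem_toFinset]
  rcases W.eq_empty_or_nonempty with hE | hne
  · obtain ⟨c, hc⟩ := hconst p q le_rfl le_rfl fun t ht hI => by
      have := (hmem t).2 ⟨ht, hI⟩
      simp [hE] at this
    have hs : s ∈ Icc (s - κ) (s + κ) := ⟨by linarith, by linarith⟩
    refine ⟨s, s, c, c, hs, hs, le_rfl, ?_, ?_, Or.inr ⟨rfl, rfl, rfl⟩⟩
    · filter_upwards [hc] with t ht hI
      exact ht ⟨hI.1, by linarith [hI.2]⟩
    · filter_upwards [hc] with t ht hI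
      exact ht ⟨by linarith [hI.1], hI.2⟩
  · have hd := (hmem _).1 (W.min'_mem hne)
    have hd' := (hmem _).1 (W.max'_mem hne)
    obtain ⟨c, hc⟩ := hconst p (W.min' hne) le_rfl hd.2.2.le fun t ht hI =>
      absurd (W.min'_le t ((hmem t).2 ⟨ht, hI.1, hI.2.trans hd.2.2⟩)) (not_le.2 hI.2)
    obtain ⟨c', hc'⟩ := hconst (W.max' hne) q hd'.2.1.le le_rfl fun t ht hI =>
      absurd (W.le_max' t ((hmem t).2 ⟨ht, hd'.2.1.trans hI.1, hI.2⟩)) (not_le.2 hI.1)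
    have hjump := And.intro hd.1 hd'.1
    exact ⟨_, _, c, c', hsub _ hd.1 hd.2, hsub _ hd'.1 hd'.2, W.min'_le _ (W.max'_mem hne),
      hc, hc', Or.inl hjump⟩

/-- Replacing the outer values `c`, `c'` of `u₁` by the plateaus `β`, `β'` of `f` does not increase
the `L¹` error on `(p,q)`; if `u₁` has no jump there, the error drops by a definite amount. -/
theorem integral_error_sub_ge {f u₁ u₂ : ℝ → ℝ} {p q s κ l β β' c c' d d' : ℝ} (hκ : 0 < κ)
    (hl : 2 * κ ≤ l) (hp : p + l ≤ s - κ) (hq : s + κ + l ≤ q)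
    (hf : ∀ t ∈ Ioo p (s - κ), f t = β) (hf' : ∀ t ∈ Ioo (s + κ) q, f t = β')
    (hfJ : ∀ t ∈ Ioo (s - κ) (s + κ), |f t - β| ≤ |β' - β| ∧ |f t - β'| ≤ |β' - β|)
    (hd : d ∈ Icc (s - κ) (s + κ)) (hd' : d' ∈ Icc (s - κ) (s + κ))
    (hc : ∀ᵐ t, t ∈ Ioo p d → u₁ t = c) (hc' : ∀ᵐ t, t ∈ Ioo d' q → u₁ t = c')
    (hu : ∀ t ∈ Ioo p d, u₂ t = β) (hu' : ∀ t ∈ Ioo d' q, u₂ t = β')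
    (huJ : ∀ t ∈ Icc d d', u₂ t = u₁ t)
    (hI : IntervalIntegrable (fun t => |u₁ t - f t| - |u₂ t - f t|) volume p q) :
    0 ≤ (∫ t in p..q, (|u₁ t - f t| - |u₂ t - f t|)) ∧
      (d = s → d' = s → c = c' →
        |β' - β| * (l - 2 * κ) ≤ ∫ t in p..q, (|u₁ t - f t| - |u₂ t - f t|)) := by
  have hA : ∀ᵐ t, t ∈ Ioo p (s - κ) → |c - β| ≤ |u₁ t - f t| - |u₂ t - f t| := by
    filter_upwards [hc] with t ht hI
    have hI' : t ∈ Ioo p d := ⟨hI.1, hI.2.trans_le hd.1⟩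
    rw [ht hI', hu t hI', hf t hI]
    simp
  have hC : ∀ᵐ t, t ∈ Ioo (s + κ) q → |c' - β'| ≤ |u₁ t - f t| - |u₂ t - f t| := by
    filter_upwards [hc'] with t ht hI
    have hI' : t ∈ Ioo d' q := ⟨hd'.2.trans_lt hI.1, hI.2⟩
    rw [ht hI', hu' t hI', hf' t hI]
    simp
  have key := fun {B : ℝ} (hB : ∀ᵐ t, t ∈ Ioo (s - κ) (s + κ) → B ≤ |u₁ t - f t| - |u₂ t - f t|) =>
    le_integral_of_ae_le_three (by linarith) (by linarith) (by linarith) hI hA hB hC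
  have h1 : |c - β| * l ≤ |c - β| * (s - κ - p) :=
    mul_le_mul_of_nonneg_left (by linarith) (abs_nonneg _)
  have h2 : |c' - β'| * l ≤ |c' - β'| * (q - (s + κ)) :=
    mul_le_mul_of_nonneg_left (by linarith) (abs_nonneg _)
  constructor
  · have h := key (B := -(|c - β| + |c' - β'|)) (by
      filter_upwards [hc, hc'] with t ht ht' hJ
      rcases lt_or_ge t d with h | h
      · have hI' : t ∈ Ioo p d := ⟨by linarith [hJ.1], h⟩
        rw [ht hI', hu t hI']
        have := abs_sub_le β c (f t)
        rw [abs_sub_comm β c] at this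
        linarith [abs_nonneg (c' - β')]
      rcases le_or_gt t d' with h' | h'
      · rw [huJ t ⟨h, h'⟩]
        linarith [abs_nonneg (c - β), abs_nonneg (c' - β')]
      · have hI' : t ∈ Ioo d' q := ⟨h', by linarith [hJ.2]⟩
        rw [ht' hI', hu' t hI']
        have := abs_sub_le β' c' (f t)
        rw [abs_sub_comm β' c'] at this
        linarith [abs_nonneg (c - β)])
    have h3 := mul_le_mul_of_nonneg_left hl (abs_nonneg (c - β))
    have h4 := mul_le_mul_of_nonneg_left hl (abs_nonneg (c' - β'))
    linarith
  · rintro rfl rfl rfl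
    have h := key (B := -|β' - β|) (by
      filter_upwards [(Set.finite_singleton d').countable.ae_notMem volume] with t ht hJ
      have h0 := abs_nonneg (u₁ t - f t)
      rcases lt_or_gt_of_ne ht with h | h
      · rw [hu t ⟨by linarith [hJ.1], h⟩, abs_sub_comm β]
        linarith [(hfJ t hJ).1]
      · rw [hu' t ⟨h, by linarith [hJ.2]⟩, abs_sub_comm β' (f t)]
        linarith [(hfJ t hJ).2])
    have h3 : |β' - β| ≤ |c - β| + |c - β'| := by
      have := abs_sub_le β' c β
      rw [abs_sub_comm β' c] at this
      linarith
    have h4 := mul_le_mul_of_nonneg_right h3 (show 0 ≤ l by linarith)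
    linarith

/-- The values of `K * g` on the part `(p,q)` of `[0,1]` around the `k`-th jump of `g`. -/
theorem convK_stepOn_block {n : ℕ} {j : Fin (n + 1) → ℝ} (α : Fin (n + 2) → ℝ) (hj : StrictMono j)
    {K : ℝ → ℝ} {κ : ℝ} (hKint : Integrable K) (hKpos : ∀ x, 0 ≤ K x) (hKnorm : (∫ x, K x) = 1)
    (hKsupp : Function.support K ⊆ Icc (-κ) κ) {k : Fin (n + 1)} {p q : ℝ}
    (hlo : ∀ i < k, j i + κ ≤ p) (hhi : ∀ i, k < i → q + κ ≤ j i) :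
    (∀ t ∈ Ioo p (j k - κ), convK K (stepOn j α) t = α k.castSucc) ∧
    (∀ t ∈ Ioo (j k + κ) q, convK K (stepOn j α) t = α k.succ) ∧
    ∀ t ∈ Ioo p q, |convK K (stepOn j α) t - α k.castSucc| ≤ |α k.succ - α k.castSucc| ∧
      |convK K (stepOn j α) t - α k.succ| ≤ |α k.succ - α k.castSucc| := by
  have hleft : ∀ r, p - κ < r → r ≤ j k → stepOn j α r = α k.castSucc := fun r hr hr' =>
    stepOn_eq_castSucc j α (fun i hi => by linarith [hlo i hi])
      fun i hi => hr'.trans (hj.monotone hi)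
  have hright : ∀ r, j k < r → r < q + κ → stepOn j α r = α k.succ := fun r hr hr' =>
    stepOn_eq_succ j α (fun i hi => (hj.monotone hi).trans_lt hr)
      fun i hi => by linarith [hhi i hi]
  have hbd := fun {t β h : ℝ} => abs_convK_sub_le (t := t) (β := β) (h := h) hKint hKpos hKnorm
    hKsupp (measurable_stepOn j α)
  refine ⟨fun t ht => ?_, fun t ht => ?_, fun t ht => ⟨hbd fun s hs => ?_, hbd fun s hs => ?_⟩⟩
  · refine sub_eq_zero.1 (abs_nonpos_iff.1 (hbd fun s hs => ?_))
    rw [hleft _ (by linarith [ht.1, hs.2]) (by linarith [ht.2, hs.1])]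
    simp
  · refine sub_eq_zero.1 (abs_nonpos_iff.1 (hbd fun s hs => ?_))
    rw [hright _ (by linarith [ht.1, hs.2]) (by linarith [ht.2, hs.1])]
    simp
  · rcases le_or_gt (t - s) (j k) with h | h
    · rw [hleft _ (by linarith [ht.1, hs.2]) h]
      simp
    · rw [hright _ h (by linarith [ht.2, hs.1])]
  · rcases le_or_gt (t - s) (j k) with h | h
    · rw [hleft _ (by linarith [ht.1, hs.2]) h, abs_sub_comm]
    · rw [hright _ h (by linarith [ht.2, hs.1])]
      simp

/-- The function equal to `u` on each `[d i, d' i]` and to the step function with jump locations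
`d` and values `α` elsewhere. -/
def splice {n : ℕ} (d d' : Fin n → ℝ) (α : Fin (n + 1) → ℝ) (u : ℝ → ℝ) : ℝ → ℝ := fun t =>
  if ∃ i, t ∈ Icc (d i) (d' i) then u t else stepOn d α t

theorem aeConstAt_of_eventually_eq {u v : ℝ → ℝ} {t : ℝ} (h : u =ᶠ[nhds t] v)
    (hv : AEConstAt v t) : AEConstAt u t := by
  obtain ⟨c, ε, hε, hc⟩ := hv
  obtain ⟨δ, hδ, hd⟩ := Metric.eventually_nhds_iff_ball.1 h
  refine ⟨c, min ε δ, lt_min hε hδ, ?_⟩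
  filter_upwards [hc] with s hs hst
  have h1 := min_le_left ε δ
  have h2 := min_le_right ε δ
  rw [hd s (by rw [Real.ball_eq_Ioo]; exact ⟨by linarith [hst.1], by linarith [hst.2]⟩)]
  exact hs ⟨by linarith [hst.1], by linarith [hst.2]⟩

theorem jumpSet_splice_subset {n : ℕ} (d d' : Fin n → ℝ) (α : Fin (n + 1) → ℝ) (u : ℝ → ℝ) :
    jumpSet (splice d d' α u) ⊆ jumpSet u ∪ (range d ∪ range d') := by
  intro t ht
  by_contra hn
  simp only [mem_union, mem_range, not_or, not_exists] at hn
  obtain ⟨hu, hd, hd'⟩ := hn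
  have hconst : AEConstAt u t := by
    by_contra h
    exact hu ⟨ht.1, h⟩
  refine ht.2 ?_
  by_cases h : ∃ i, t ∈ Icc (d i) (d' i)
  · obtain ⟨i, hi⟩ := h
    refine aeConstAt_of_eventually_eq ?_ hconst
    filter_upwards [Ioo_mem_nhds (lt_of_le_of_ne hi.1 (hd i))
      (lt_of_le_of_ne hi.2 fun e => hd' i e.symm)] with s hs
    exact if_pos ⟨i, Ioo_subset_Icc_self hs⟩
  · push Not at h
    have hev : splice d d' α u =ᶠ[nhds t] fun _ => stepOn d α t := by
      have hall : ∀ i, ∀ᶠ s in nhds t, s ∉ Icc (d i) (d' i) ∧ (d i < s ↔ d i < t) := by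
        intro i
        refine Filter.Eventually.and (isClosed_Icc.isOpen_compl.mem_nhds (h i)) ?_
        rcases lt_or_gt_of_ne (hd i) with h | h
        · filter_upwards [lt_mem_nhds h] with s hs
          exact iff_of_true hs h
        · filter_upwards [gt_mem_nhds h] with s hs
          exact iff_of_false (not_lt.2 hs.le) (not_lt.2 h.le)
      filter_upwards [eventually_all.2 hall] with s hs
      rw [splice, if_neg (fun ⟨i, hi⟩ => (hs i).1 hi)]
      simp only [stepOn, fun i => (hs i).2]
    exact aeConstAt_of_eventually_eq hev ⟨_, 1, one_pos, Eventually.of_forall fun _ _ => rfl⟩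

theorem statement_14
    (n : ℕ) (j : Fin (n + 1) → ℝ) (α : Fin (n + 2) → ℝ)
    (hj : StrictMono j) (hj0 : 0 < j 0) (hj1 : j (Fin.last n) < 1)
    (hadj : ∀ i : Fin (n + 1), α i.castSucc ≠ α i.succ)
    (K : ℝ → ℝ) (κ : ℝ) (hκ : 0 < κ)
    (hKint : Integrable K) (hKpos : ∀ x, 0 ≤ K x)
    (hKsym : ∀ x, K (-x) = K x) (hKnorm : (∫ x, K x) = 1)
    (hKsupp : Function.support K ⊆ Set.Icc (-κ) κ)
    (hκl : κ ≤ lmin j / 6)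
    (γ : ℝ) (hγ : 0 < γ)
    (hcond : 6 * hjumpMax α * κ ≤ (1 / 2) * hjumpMin α * (lmin j - 2 * κ) - γ)
    (u₁ : ℝ → ℝ)
    -- `u₁` is piecewise constant with no jump in `∪ᵢ Nᵢ`, i.e. all its jump
    -- locations lie in `∪ᵢ Jᵢ`
    (hu₁ : IsPCIn u₁ (⋃ i : Fin (n + 1), Set.Icc (j i - κ) (j i + κ))) :
    ∃ u₂ : ℝ → ℝ, IsPC u₂ ∧
      PottsVal γ (convK K (stepOn j α)) u₂ ≤ PottsVal γ (convK K (stepOn j α)) u₁ ∧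
      -- `u₂` has at least one jump in each `Jᵢ`: it has a minimal (adjacent values
      -- distinct) representation with an interior partition point in each `Jᵢ`
      ∃ (m : ℕ) (x : Fin (m + 2) → ℝ) (a : Fin (m + 1) → ℝ),
        IsPCRep u₂ x a ∧ (∀ ii : Fin m, a ii.castSucc ≠ a ii.succ) ∧
        ∀ i : Fin (n + 1), ∃ lidx : Fin (m + 2),
          lidx ≠ 0 ∧ lidx ≠ Fin.last (m + 1) ∧ x lidx ∈ Set.Icc (j i - κ) (j i + κ) := by
  set f := convK K (stepOn j α) with hfdef
  set l := lmin j / 2 - κ with hldef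
  have hl : 2 * κ ≤ l := by linarith
  have hpc₁ : IsPC u₁ := by
    obtain ⟨m, x, a, h, -⟩ := hu₁
    exact ⟨m, x, a, h⟩
  have hfin := hpc₁.finite_jumpSet
  have hD₁ : ∀ t ∈ jumpSet u₁, ∃ i, t ∈ Icc (j i - κ) (j i + κ) := by
    intro t ht
    obtain ⟨m, x, a, h, hx⟩ := hu₁
    obtain ⟨i, hi0, hi1, rfl⟩ := h.exists_of_mem_jumpSet ht
    exact mem_iUnion.1 (hx i hi0 hi1)
  obtain ⟨p, hp0, hp1, hp⟩ := exists_separators hj (show 0 < lmin j by linarith)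
  have hloc : ∀ k i : Fin (n + 1), ∀ t ∈ Ioo (p k) (p (k + 1)),
      t ∈ Icc (j i - κ) (j i + κ) → i = k := by
    intro k i t ht hti
    obtain ⟨-, -, h1, h2, -⟩ := hp k
    rcases lt_trichotomy i k with h | h | h
    · linarith [h1 i h, ht.1, hti.2]
    · exact h
    · linarith [h2 i h, ht.2, hti.1]
  have hblock := fun k : Fin (n + 1) => exists_first_last_jump (u := u₁) (p := p k)
    (q := p (k + 1)) (s := j k) hκ (by linarith [(hp k).1]) (by linarith [(hp k).2.1])
    (hp k).2.2.2.2.1 (hp k).2.2.2.2.2 hfin fun t ht hI => by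
      obtain ⟨i, hi⟩ := hD₁ t ht
      rwa [hloc k i t hI hi] at hi
  choose d d' c c' hd hd' hdd hc hc' hcase using hblock
  set u₂ := splice d d' α u₁ with hu₂
  -- the values of `u₂` on the `k`-th block
  have hlo : ∀ k : Fin (n + 1), ∀ t ∈ Ioo (p k) (p (k + 1)), ∀ i < k, d' i < t :=
    fun k t ht i hi => by linarith [(hp k).2.2.1 i hi, (hd' i).2, ht.1]
  have hhi : ∀ k : Fin (n + 1), ∀ t ∈ Ioo (p k) (p (k + 1)), ∀ i, k < i → t < d i :=
    fun k t ht i hi => by linarith [(hp k).2.2.2.1 i hi, (hd i).1, ht.2]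
  have hpd : ∀ k : Fin (n + 1), p k < d k ∧ d' k < p (k + 1) := fun k =>
    ⟨by linarith [(hp k).1, (hd k).1], by linarith [(hp k).2.1, (hd' k).2]⟩
  have hu₂l : ∀ k : Fin (n + 1), ∀ t ∈ Ioo (p k) (d k), u₂ t = α k.castSucc := by
    intro k t ht
    have htI : t ∈ Ioo (p k) (p (k + 1)) :=
      ⟨ht.1, ht.2.trans ((hdd k).trans_lt (hpd k).2)⟩
    have h1 := hlo k t htI
    have h2 : ∀ i, k ≤ i → t < d i := fun i hi => by
      rcases hi.eq_or_lt with rfl | hi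
      · exact ht.2
      · exact hhi k t htI i hi
    rw [hu₂, splice, if_neg]
    · exact stepOn_eq_castSucc d α (fun i hi => (hdd i).trans_lt (h1 i hi)) fun i hi => (h2 i hi).le
    · rintro ⟨i, hi⟩
      rcases lt_or_ge i k with h | h
      · exact absurd hi.2 (not_le.2 (h1 i h))
      · exact absurd hi.1 (not_le.2 (h2 i h))
  have hu₂r : ∀ k : Fin (n + 1), ∀ t ∈ Ioo (d' k) (p (k + 1)), u₂ t = α k.succ := by
    intro k t ht
    have htI : t ∈ Ioo (p k) (p (k + 1)) :=
      ⟨((hpd k).1.trans_le (hdd k)).trans ht.1, ht.2⟩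
    have h2 := hhi k t htI
    have h1 : ∀ i ≤ k, d' i < t := fun i hi => by
      rcases hi.eq_or_lt with rfl | hi
      · exact ht.1
      · exact hlo k t htI i hi
    rw [hu₂, splice, if_neg]
    · exact stepOn_eq_succ d α (fun i hi => (hdd i).trans_lt (h1 i hi)) fun i hi => (h2 i hi).le
    · rintro ⟨i, hi⟩
      rcases le_or_gt i k with h | h
      · exact absurd hi.2 (not_le.2 (h1 i h))
      · exact absurd hi.1 (not_le.2 (h2 i h))
  have hu₂m : ∀ k, ∀ t ∈ Icc (d k) (d' k), u₂ t = u₁ t := fun k t ht => if_pos ⟨k, ht⟩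
  -- the jumps of `u₂`
  set M : Finset (Fin (n + 1)) :=
    Finset.univ.filter fun k => ¬ (d k ∈ jumpSet u₁ ∧ d' k ∈ jumpSet u₁) with hM
  have hMcase : ∀ k ∈ M, d k = j k ∧ d' k = j k ∧ c k = c' k := fun k hk =>
    (hcase k).resolve_left (Finset.mem_filter.1 hk).2
  have hJ₂ : jumpSet u₂ ⊆ (hfin.toFinset ∪ M.image j : Finset ℝ) := by
    refine (jumpSet_splice_subset d d' α u₁).trans ?_
    rw [Finset.coe_union, Set.Finite.coe_toFinset, Finset.coe_image]
    have hmem : ∀ k, d k ∈ jumpSet u₁ ∪ j '' M ∧ d' k ∈ jumpSet u₁ ∪ j '' M := by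
      intro k
      by_cases hk : k ∈ M
      · obtain ⟨h1, h2, -⟩ := hMcase k hk
        rw [h1, h2]
        exact ⟨Or.inr ⟨k, hk, rfl⟩, Or.inr ⟨k, hk, rfl⟩⟩
      · simp only [hM, Finset.mem_filter, Finset.mem_univ, true_and, not_not] at hk
        exact ⟨Or.inl hk.1, Or.inl hk.2⟩
    rintro t (ht | ⟨k, rfl⟩ | ⟨k, rfl⟩)
    · exact Or.inl ht
    · exact (hmem k).1
    · exact (hmem k).2
  have hJ₂' : ∀ t ∈ jumpSet u₂, ∃ i, t ∈ Icc (j i - κ) (j i + κ) := by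
    intro t ht
    have h := hJ₂ ht
    simp only [Finset.coe_union, Set.Finite.coe_toFinset, Finset.coe_image] at h
    rcases h with h | ⟨i, -, rfl⟩
    · exact hD₁ t h
    · exact ⟨i, by linarith, by linarith⟩
  obtain ⟨hpc₂, hjumps⟩ := isPC_of_jumpSet_subset (hfin.toFinset ∪ M.image j) (by
    intro t ht
    rcases Finset.mem_union.1 ht with h | h
    · exact ((Set.Finite.mem_toFinset _).1 h).1
    · obtain ⟨i, -, rfl⟩ := Finset.mem_image.1 h
      exact ⟨hj0.trans_le (hj.monotone (Fin.zero_le i)),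
        (hj.monotone (Fin.le_last i)).trans_lt hj1⟩) hJ₂
  have hcount : (jumps u₂ : ℝ) ≤ jumps u₁ + M.card := by
    have h1 := hjumps.trans ((Finset.card_union_le _ _).trans
      (Nat.add_le_add hpc₁.card_jumpSet_le Finset.card_image_le))
    exact_mod_cast h1
  refine ⟨u₂, hpc₂, ?_, ?_⟩
  · -- the comparison of the functionals, block by block
    have hf : Integrable f mu01 := integrable_convK_stepOn j α hKint hKpos hKnorm hKsupp
    have hi₁ : Integrable (fun t => |u₁ t - f t|) mu01 := (hpc₁.integrable.sub hf).abs
    have hi₂ : Integrable (fun t => |u₂ t - f t|) mu01 := (hpc₂.integrable.sub hf).abs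
    have hI : ∀ a b : ℝ, 0 ≤ a → a ≤ b → b ≤ 1 →
        IntervalIntegrable (fun t => |u₁ t - f t| - |u₂ t - f t|) volume a b := by
      intro a b ha hab hb
      rw [intervalIntegrable_iff_integrableOn_Ioc_of_le hab]
      exact IntegrableOn.mono_set (hi₁.sub hi₂)
        fun t ht => ⟨ha.trans ht.1.le, ht.2.trans hb⟩
    have hpk : ∀ k : Fin (n + 1), p k ≤ p (k + 1) := fun k =>
      ((hpd k).1.trans_le ((hdd k).trans (hpd k).2.le)).le
    have hmain : ∀ k : Fin (n + 1), (if k ∈ M then γ else 0) ≤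
        ∫ t in p k..p (k + 1), (|u₁ t - f t| - |u₂ t - f t|) := by
      intro k
      obtain ⟨hq1, hq2, hq3, hq4, hq5, hq6⟩ := hp k
      obtain ⟨hf1, hf2, hf3⟩ := convK_stepOn_block α hj hKint hKpos hKnorm hKsupp (k := k)
        (p := p k) (q := p (k + 1)) (fun i hi => by linarith [hq3 i hi])
        (fun i hi => by linarith [hq4 i hi])
      obtain ⟨h1, h2⟩ := integral_error_sub_ge hκ hl (by linarith) (by linarith) hf1 hf2
        (fun t ht => hf3 t ⟨by linarith [ht.1], by linarith [ht.2]⟩)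
        (hd k) (hd' k) (hc k) (hc' k) (hu₂l k) (hu₂r k) (hu₂m k) (hI _ _ hq5 (hpk k) hq6)
      split_ifs with hk
      · obtain ⟨e1, e2, e3⟩ := hMcase k hk
        refine le_trans ?_ (h2 e1 e2 e3)
        have hmin : hjumpMin α ≤ |α k.succ - α k.castSucc| :=
          Finset.inf'_le _ (Finset.mem_univ k)
        have hmax : |α k.succ - α k.castSucc| ≤ hjumpMax α :=
          Finset.le_sup' (fun i : Fin (n + 1) => |α i.succ - α i.castSucc|) (Finset.mem_univ k)
        have m1 := mul_le_mul_of_nonneg_right hmin (show 0 ≤ l by linarith)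
        have m2 := mul_le_mul_of_nonneg_right hmax hκ.le
        have m3 := mul_nonneg ((abs_nonneg _).trans hmax) hκ.le
        have m4 : (1 / 2) * hjumpMin α * (lmin j - 2 * κ) = hjumpMin α * l := by
          rw [hldef]; ring
        linarith
      · exact h1
    have hsum : ∑ k : Fin (n + 1), ∫ t in p k..p (k + 1), (|u₁ t - f t| - |u₂ t - f t|) =
        L1dist u₁ f - L1dist u₂ f := by
      rw [Fin.sum_univ_eq_sum_range
        (fun k => ∫ t in p k..p (k + 1), (|u₁ t - f t| - |u₂ t - f t|)),
        intervalIntegral.sum_integral_adjacent_intervals, hp0, hp1]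
      · rw [intervalIntegral.integral_of_le zero_le_one, ← integral_Icc_eq_integral_Ioc]
        exact integral_sub hi₁ hi₂
      · intro k hk
        exact hI _ _ (hp ⟨k, hk⟩).2.2.2.2.1 (hpk ⟨k, hk⟩) (hp ⟨k, hk⟩).2.2.2.2.2
    have htotal := Finset.sum_le_sum fun k (_ : k ∈ Finset.univ) => hmain k
    rw [hsum, Finset.sum_ite_mem, Finset.univ_inter, Finset.sum_const, nsmul_eq_mul] at htotal
    have hγJ := mul_le_mul_of_nonneg_left hcount hγ.le
    unfold PottsVal
    linarith
  · obtain ⟨m, x, a, hr, hne, hx⟩ := hpc₂.exists_reduced_rep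
    refine ⟨m, x, a, hr, hne, fun k => ?_⟩
    have hex : ∃ t ∈ jumpSet u₂, t ∈ Icc (j k - κ) (j k + κ) := by
      by_contra! hno
      obtain ⟨C, hC⟩ : ∃ C, ∀ᵐ t, t ∈ Ioo (p k) (p (k + 1)) → u₂ t = C := by
        refine ae_const_of_aeConstAt fun t ht => ?_
        by_contra hn
        have htJ : t ∈ jumpSet u₂ :=
          ⟨⟨(hp k).2.2.2.2.1.trans_lt ht.1, ht.2.trans_le (hp k).2.2.2.2.2⟩, hn⟩
        obtain ⟨i, hi⟩ := hJ₂' t htJ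
        exact hno t htJ (hloc k i t ht hi ▸ hi)
      obtain ⟨t, ht, hCt⟩ := exists_mem_Ioo_of_ae hC (hpd k).1
      obtain ⟨t', ht', hCt'⟩ := exists_mem_Ioo_of_ae hC (hpd k).2
      refine hadj k ?_
      rw [← hu₂l k t ht, ← hu₂r k t' ht',
        hCt ⟨ht.1, ht.2.trans ((hdd k).trans_lt (hpd k).2)⟩,
        hCt' ⟨((hpd k).1.trans_le (hdd k)).trans ht'.1, ht'.2⟩]
    obtain ⟨t, ht, htk⟩ := hex
    obtain ⟨i, hi0, hi1, rfl⟩ := hx t ht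
    exact ⟨i, hi0, hi1, htk⟩
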